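/- Let p = 3 and let n be an odd integer greater than 1 with n ≠ 5. Then 3 splits in the imaginary quadratic field K = ℚ(√(1 − 3^n)), and for any prime ideal ℘ of the ring of integers of K lying over 3, the order of the ideal class of ℘ in the ideal class group of K is exactly n. -/

import Mathlib

/-!
Put `δ = √(1 - 3 ^ n)`. Since `(1 + δ) * (1 - δ) = 3 ^ n` with coprime factors, the primes over `3`
are `(3, 1 ± δ)`, and `(3, 1 + δ) ^ n = (1 + δ)`. If `(3, 1 + δ) ^ s = (β)` with `n = s * m`, then
`β ^ m = 1 + δ` after possibly changing the sign of `β`. Write `β = a + b * δ`. As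
`1 - 3 ^ n ≡ 2 [ZMOD 4]`, the coefficient `a` is an integer, and taking the trace of `β ^ m` shows
that it divides `1`. Comparing norms, `3 ^ s = 1 + (3 ^ n - 1) * b ^ 2`, so that
`(3 ^ n - 1) / (3 ^ s - 1)` is a square. This is a Pell equation in powers of `3`, solvable only for
`m = 1` and for `s = 1`, `m = 5`.
-/

open IntermediateField Module NumberField Polynomial

section Ideals

variable {R : Type*} [CommRing R] {p α α' : R}

theorem sup_pow_le_pow_sup (I J : Ideal R) (n : ℕ) : (I ⊔ J) ^ n ≤ I ^ n ⊔ J := by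
  induction n with
  | zero => simp
  | succ n ih =>
    calc (I ⊔ J) ^ (n + 1) ≤ (I ^ n ⊔ J) * (I ⊔ J) := by
          rw [pow_succ]
          exact Ideal.mul_mono ih le_rfl
      _ = (I ^ n * I ⊔ I ^ n * J) ⊔ J * (I ⊔ J) := by rw [Ideal.sup_mul, Ideal.mul_sup]
      _ ≤ I ^ (n + 1) ⊔ J := by
          rw [← pow_succ]
          exact sup_le (sup_le_sup le_rfl Ideal.mul_le_right) (le_sup_of_le_right Ideal.mul_le_left)

theorem isCoprime_span_pair (h : IsCoprime p (α + α')) :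
    IsCoprime (Ideal.span {p, α}) (Ideal.span {p, α'}) := by
  obtain ⟨u, v, huv⟩ := h
  refine Ideal.isCoprime_iff_exists.2 ⟨u * p + v * α, ?_, v * α', ?_, by linear_combination huv⟩
  · exact Ideal.mem_span_pair.2 ⟨u, v, rfl⟩
  · exact Ideal.mem_span_pair.2 ⟨0, v, by ring⟩

theorem span_pair_mul_span_pair_eq_span (h : IsCoprime p (α + α')) (hdvd : p ∣ α * α') :
    Ideal.span {p, α} * Ideal.span {p, α'} = Ideal.span {p} := by
  obtain ⟨u, v, huv⟩ := h
  rw [Ideal.span_pair_mul_span_pair]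
  apply le_antisymm
  · simp only [Ideal.span_le, Set.insert_subset_iff, Set.singleton_subset_iff, SetLike.mem_coe,
      Ideal.mem_span_singleton]
    exact ⟨dvd_mul_right p p, dvd_mul_right p α', dvd_mul_left p α, hdvd⟩
  · set J := Ideal.span {p * p, p * α', α * p, α * α'}
    have hpp : p * p ∈ J := Ideal.subset_span (by simp)
    have hpα' : p * α' ∈ J := Ideal.subset_span (by simp)
    have hαp : α * p ∈ J := Ideal.subset_span (by simp)
    have hp : p = u * (p * p) + v * (α * p + p * α') := by linear_combination -p * huv
    rw [Ideal.span_singleton_le_iff_mem, hp]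
    exact add_mem (J.mul_mem_left u hpp) (J.mul_mem_left v (add_mem hαp hpα'))

theorem span_pair_pow_eq_span {n : ℕ} (h : IsCoprime p (α + α')) (hmul : α * α' = p ^ n) :
    Ideal.span {p, α} ^ n = Ideal.span {α} := by
  apply le_antisymm
  · rw [Ideal.span_insert]
    refine (sup_pow_le_pow_sup _ _ n).trans (sup_le ?_ le_rfl)
    rw [Ideal.span_singleton_pow, Ideal.span_singleton_le_span_singleton, ← hmul]
    exact dvd_mul_right α α'
  · have hcop : IsCoprime α α' := by
      obtain ⟨u, v, huv⟩ : IsCoprime (α * α') (α + α') := hmul ▸ h.pow_left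
      exact ⟨u * α' + v, v, by linear_combination huv⟩
    obtain ⟨u, v, huv⟩ := hcop.pow_left (m := n)
    have hp : α * α' ∈ Ideal.span {p, α} ^ n := by
      rw [hmul]; exact Ideal.pow_mem_pow (Ideal.subset_span (by simp)) n
    have hα : α ^ n ∈ Ideal.span {p, α} ^ n :=
      Ideal.pow_mem_pow (Ideal.subset_span (by simp)) n
    have hsum : u * α * α ^ n + v * (α * α') = α := by linear_combination α * huv
    have hmem := add_mem (Ideal.mul_mem_left _ (u * α) hα) (Ideal.mul_mem_left _ v hp)
    rwa [hsum, ← Ideal.span_singleton_le_iff_mem] at hmem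

theorem orderOf_mk0_eq_of_pow_eq_span [IsDedekindDomain R] {I : Ideal R}
    (hI : I ∈ nonZeroDivisors (Ideal R)) {n : ℕ} (hpow : I ^ n = Ideal.span {α})
    (hα : ∀ (β : R) (s m : ℕ), n = s * m → Associated (β ^ m) α → m = 1) :
    orderOf (ClassGroup.mk0 ⟨I, hI⟩) = n := by
  have mk0_pow_eq_one_iff (k : ℕ) :
      ClassGroup.mk0 ⟨I, hI⟩ ^ k = 1 ↔ (I ^ k).IsPrincipal := by
    rw [← map_pow, SubmonoidClass.mk_pow, ClassGroup.mk0_eq_one_iff]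
  obtain ⟨m, hm⟩ : orderOf (ClassGroup.mk0 ⟨I, hI⟩) ∣ n :=
    orderOf_dvd_of_pow_eq_one ((mk0_pow_eq_one_iff n).2 ⟨α, hpow⟩)
  obtain ⟨β, hβ⟩ := (mk0_pow_eq_one_iff _).1 (pow_orderOf_eq_one _)
  have hassoc : Associated (β ^ m) α := by
    rw [← Ideal.span_singleton_eq_span_singleton, ← Ideal.span_singleton_pow,
      ← hpow, hm, pow_mul, hβ]
  rw [hα β _ m hm hassoc, mul_one] at hm
  exact hm.symm

theorem eq_or_eq_of_mul_le [IsDedekindDomain R] {P Q I : Ideal R} (hP : P.IsPrime)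
    (hQ : Q.IsPrime) (hI : I.IsPrime) (hne : P * Q ≠ 0) (hle : P * Q ≤ I) : I = P ∨ I = Q := by
  rcases hI.mul_le.1 hle with h | h
  · exact .inl ((hP.isMaximal (left_ne_zero_of_mul hne)).eq_of_le hI.ne_top h).symm
  · exact .inr ((hQ.isMaximal (right_ne_zero_of_mul hne)).eq_of_le hI.ne_top h).symm

end Ideals

section QuadraticExtension

variable {F K : Type*} [Field F] [Field K] [Algebra F K] {d : F} {δ : K}

theorem leftMulMatrix_add_mul_sqrt {B : Basis (Fin 2) F K} (hB : ⇑B = ![1, δ])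
    (hδ : δ ^ 2 = algebraMap F K d) (a b : F) :
    Algebra.leftMulMatrix B (algebraMap F K a + algebraMap F K b * δ) = !![a, d * b; b, a] := by
  have hmul_one : (algebraMap F K a + algebraMap F K b * δ) * B 0 = a • B 0 + b • B 1 := by
    simp [hB, Algebra.smul_def]
  have hmul_sqrt :
      (algebraMap F K a + algebraMap F K b * δ) * B 1 = (d * b) • B 0 + a • B 1 := by
    simp only [hB, Algebra.smul_def, Matrix.cons_val_zero, Matrix.cons_val_one, map_mul]
    linear_combination algebraMap F K b * hδ
  ext i j
  fin_cases i <;> fin_cases j <;>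
    simp [Algebra.leftMulMatrix_eq_repr_mul, hmul_one, hmul_sqrt]

theorem isQuadraticExtension_adjoin_sqrt (hd : ¬IsSquare d) (hδ : δ ^ 2 = algebraMap F K d) :
    Algebra.IsQuadraticExtension F F⟮δ⟯ := by
  have hirr : Irreducible (X ^ 2 - C d) :=
    X_pow_sub_C_irreducible_of_prime Nat.prime_two fun b hb ↦ hd ⟨b, by rw [← hb, sq]⟩
  have hmonic : (X ^ 2 - C d).Monic := monic_X_pow_sub_C d two_ne_zero
  have hroot : aeval δ (X ^ 2 - C d) = 0 := by simp [hδ]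
  have hint : IsIntegral F δ := ⟨_, hmonic, hroot⟩
  refine ⟨?_⟩
  rw [IntermediateField.adjoin.finrank hint,
    ← minpoly.eq_of_irreducible_of_monic hirr hroot hmonic, natDegree_X_pow_sub_C]

variable [Algebra.IsQuadraticExtension F K]

theorem exists_basis_one_sqrt (hd : ¬IsSquare d) (hδ : δ ^ 2 = algebraMap F K d) :
    ∃ B : Basis (Fin 2) F K, ⇑B = ![1, δ] := by
  have hli : LinearIndependent F ![1, δ] := by
    refine LinearIndependent.pair_iff.2 fun a b hab ↦ ?_
    have hsq : a ^ 2 = b ^ 2 * d := by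
      apply (algebraMap F K).injective
      simp only [Algebra.smul_def] at hab
      simp only [map_mul, map_pow, ← hδ]
      linear_combination (algebraMap F K a - algebraMap F K b * δ) * hab
    have hb : b = 0 := by
      by_contra hb
      exact hd ⟨a / b, by field_simp; linear_combination -hsq⟩
    exact ⟨by simpa [hb] using hsq, hb⟩
  exact ⟨basisOfLinearIndependentOfCardEqFinrank hli
    (by simp [Algebra.IsQuadraticExtension.finrank_eq_two F K]), by simp⟩

theorem exists_eq_add_mul_sqrt (hd : ¬IsSquare d) (hδ : δ ^ 2 = algebraMap F K d) (x : K) :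
    ∃ a b : F, x = algebraMap F K a + algebraMap F K b * δ := by
  obtain ⟨B, hB⟩ := exists_basis_one_sqrt hd hδ
  refine ⟨B.repr x 0, B.repr x 1, ?_⟩
  simpa [hB, Fin.sum_univ_two, Algebra.smul_def] using (B.sum_repr x).symm

theorem trace_add_mul_sqrt (hd : ¬IsSquare d) (hδ : δ ^ 2 = algebraMap F K d) (a b : F) :
    Algebra.trace F K (algebraMap F K a + algebraMap F K b * δ) = 2 * a := by
  obtain ⟨B, hB⟩ := exists_basis_one_sqrt hd hδ
  rw [Algebra.trace_eq_matrix_trace B, leftMulMatrix_add_mul_sqrt hB hδ,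
    Matrix.trace_fin_two_of, two_mul]

theorem norm_add_mul_sqrt (hd : ¬IsSquare d) (hδ : δ ^ 2 = algebraMap F K d) (a b : F) :
    Algebra.norm F (algebraMap F K a + algebraMap F K b * δ) = a ^ 2 - d * b ^ 2 := by
  obtain ⟨B, hB⟩ := exists_basis_one_sqrt hd hδ
  rw [Algebra.norm_eq_matrix_det B, leftMulMatrix_add_mul_sqrt hB hδ, Matrix.det_fin_two_of]
  ring

end QuadraticExtension

theorem emod_four_of_isSquare {k : ℤ} (hk : IsSquare k) : k % 4 = 0 ∨ k % 4 = 1 := by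
  obtain ⟨r, rfl⟩ := hk
  rcases Int.even_or_odd r with hr | hr
  · exact Or.inl (Int.emod_eq_zero_of_dvd (mul_dvd_mul hr.two_dvd hr.two_dvd))
  · exact Or.inr (by simpa [sq] using Int.sq_mod_four_eq_one_of_odd hr)

theorem not_isSquare_of_emod_four {k : ℤ} (hk : k % 4 = 2 ∨ k % 4 = 3) : ¬IsSquare k := by
  intro h
  have := emod_four_of_isSquare h
  omega

theorem not_isSquare_ratCast_of_emod_four {k : ℤ} (hk : k % 4 = 2 ∨ k % 4 = 3) :
    ¬IsSquare (k : ℚ) :=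
  Rat.isSquare_intCast_iff.not.2 (not_isSquare_of_emod_four hk)

section QuadraticField

variable {K : Type*} [Field K] [NumberField K] {d : ℤ} {δ : 𝓞 K}

theorem coe_sq_eq_algebraMap (hδ : δ ^ 2 = d) : (δ : K) ^ 2 = algebraMap ℚ K d := by
  simpa using congrArg (algebraMap (𝓞 K) K) hδ

theorem mul_two_mul_sub_eq_norm (hδ : δ ^ 2 = d) {x : 𝓞 K} {a : ℤ} {b : ℚ}
    (hx : (x : K) = a + b * δ) (hnorm : (Algebra.norm ℤ x : ℚ) = a ^ 2 - d * b ^ 2) :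
    x * (2 * a - x) = Algebra.norm ℤ x := by
  have hδ' : (δ : K) ^ 2 = d := by simpa using coe_sq_eq_algebraMap hδ
  have hnorm' : (Algebra.norm ℤ x : K) = a ^ 2 - d * b ^ 2 := mod_cast congrArg ((↑) : ℚ → K) hnorm
  refine RingOfIntegers.ext ?_
  simp only [map_mul, map_sub, map_ofNat, map_intCast, hx, hnorm']
  linear_combination -b ^ 2 * hδ'

variable [Algebra.IsQuadraticExtension ℚ K]

theorem norm_one_add_sqrt (hd : ¬IsSquare (d : ℚ)) (hδ : δ ^ 2 = d) :
    Algebra.norm ℤ (1 + δ) = 1 - d := by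
  have h := norm_add_mul_sqrt hd (coe_sq_eq_algebraMap hδ) 1 1
  rw [← @Int.cast_inj ℚ, Algebra.coe_norm_int]
  simpa using h

-- If the trace `T` were odd, then `d * (T ^ 2 - 4 * N)` would be a square congruent to `d` mod `4`.
theorem even_trace_of_emod_four (hd : d % 4 = 2 ∨ d % 4 = 3) (hδ : δ ^ 2 = d) (x : 𝓞 K) :
    Even (Algebra.trace ℤ (𝓞 K) x) := by
  have hd' := not_isSquare_ratCast_of_emod_four hd
  have hδ' := coe_sq_eq_algebraMap hδ
  obtain ⟨a, b, hx⟩ := exists_eq_add_mul_sqrt hd' hδ' x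
  have htrace := trace_add_mul_sqrt hd' hδ' a b
  have hnorm := norm_add_mul_sqrt hd' hδ' a b
  rw [← hx, ← Algebra.coe_trace_int] at htrace
  rw [← hx, ← Algebra.coe_norm_int] at hnorm
  by_contra hodd
  have hsq := Int.sq_mod_four_eq_one_of_odd (Int.not_even_iff_odd.1 hodd)
  have hdisc : IsSquare (d * (Algebra.trace ℤ (𝓞 K) x ^ 2 - 4 * Algebra.norm ℤ x)) := by
    rw [← Rat.isSquare_intCast_iff]
    push_cast
    exact ⟨2 * d * b, by rw [htrace, hnorm]; ring⟩
  have hmod := emod_four_of_isSquare hdisc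
  have hdisc_mod : (Algebra.trace ℤ (𝓞 K) x ^ 2 - 4 * Algebra.norm ℤ x) % 4 = 1 := by omega
  rw [Int.mul_emod, hdisc_mod] at hmod
  omega

theorem exists_eq_intCast_add_ratCast_mul_sqrt (hd : d % 4 = 2 ∨ d % 4 = 3) (hδ : δ ^ 2 = d)
    (x : 𝓞 K) :
    ∃ (a : ℤ) (b : ℚ), (x : K) = a + b * δ ∧ (Algebra.norm ℤ x : ℚ) = a ^ 2 - d * b ^ 2 := by
  have hd' := not_isSquare_ratCast_of_emod_four hd
  have hδ' := coe_sq_eq_algebraMap hδ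
  obtain ⟨a, b, hx⟩ := exists_eq_add_mul_sqrt hd' hδ' x
  obtain ⟨c, hc⟩ := even_trace_of_emod_four hd hδ x
  obtain rfl : (c : ℚ) = a := by
    have htrace := trace_add_mul_sqrt hd' hδ' a b
    rw [← hx, ← Algebra.coe_trace_int, hc] at htrace
    push_cast at htrace
    linarith
  refine ⟨c, b, by simpa using hx, ?_⟩
  rw [Algebra.coe_norm_int, hx, norm_add_mul_sqrt hd' hδ']

theorem eq_one_or_eq_neg_one_of_isUnit (hd : d % 4 = 2 ∨ d % 4 = 3) (hneg : d < 0)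
    (hsq : ¬IsSquare (-d)) (hδ : δ ^ 2 = d) {u : 𝓞 K} (hu : IsUnit u) : u = 1 ∨ u = -1 := by
  obtain ⟨a, b, hab, hnorm⟩ := exists_eq_intCast_add_ratCast_mul_sqrt hd hδ u
  have hneg' : (d : ℚ) < 0 := mod_cast hneg
  have hnorm_one : Algebra.norm ℤ u = 1 := by
    refine (Int.isUnit_iff.1 (hu.map (Algebra.norm ℤ))).resolve_right fun h ↦ ?_
    rw [h] at hnorm
    push_cast at hnorm
    nlinarith [sq_nonneg (a : ℚ), sq_nonneg b]
  rw [hnorm_one, Int.cast_one] at hnorm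
  have hb : b = 0 := by
    by_contra hb
    have ha : (a : ℚ) ^ 2 < 1 := by nlinarith [sq_pos_of_ne_zero hb]
    obtain rfl : a = 0 := by
      rw [← sq_eq_zero_iff]
      have : a ^ 2 < 1 := mod_cast ha
      linarith [sq_nonneg a]
    refine hsq (Rat.isSquare_intCast_iff.1 ⟨b⁻¹, ?_⟩)
    push_cast at hnorm ⊢
    field_simp
    linarith
  obtain rfl : u = a := RingOfIntegers.ext (by simpa [hb] using hab)
  have ha : a ^ 2 = 1 := by
    rw [← @Int.cast_inj ℚ]
    simpa [hb] using hnorm.symm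
  exact (sq_eq_one_iff.1 ha).imp (by simp +contextual) (by simp +contextual)

theorem exists_pow_eq_of_associated (hd : d % 4 = 2 ∨ d % 4 = 3) (hneg : d < 0)
    (hsq : ¬IsSquare (-d)) (hδ : δ ^ 2 = d) {α β : 𝓞 K} {m : ℕ} (hm : Odd m)
    (hβ : Associated (β ^ m) α) : ∃ γ : 𝓞 K, γ ^ m = α := by
  obtain ⟨u, hu⟩ := hβ
  rcases eq_one_or_eq_neg_one_of_isUnit hd hneg hsq hδ u.isUnit with h1 | h1
  · exact ⟨β, by rw [← hu, h1, mul_one]⟩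
  · exact ⟨-β, by rw [← hu, h1, hm.neg_pow, mul_neg_one]⟩

theorem conj_pow_eq_one_sub_sqrt (hd : ¬IsSquare (d : ℚ)) (hδ : δ ^ 2 = d) {β β' : 𝓞 K} {m : ℕ}
    (hβ : β ^ m = 1 + δ) (hβ' : β * β' = Algebra.norm ℤ β) : β' ^ m = 1 - δ := by
  have hnorm := norm_one_add_sqrt hd hδ
  have hne : 1 + δ ≠ 0 := by
    intro h
    rw [h, Algebra.norm_zero] at hnorm
    exact hd ⟨1, by rw [← sub_eq_zero.1 hnorm.symm]; simp⟩
  refine mul_left_cancel₀ hne ?_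
  calc (1 + δ) * β' ^ m = (Algebra.norm ℤ β ^ m : ℤ) := by
        rw [← hβ, ← mul_pow, hβ', Int.cast_pow]
    _ = 1 - d := by rw [← map_pow, hβ, hnorm, Int.cast_sub, Int.cast_one]
    _ = (1 + δ) * (1 - δ) := by linear_combination hδ

-- With `β = a + b * δ`, the sum `2 * a` of `β` and its conjugate divides the sum of their odd
-- powers, which is `(1 + δ) + (1 - δ) = 2`; so `a ^ 2 = 1`.
theorem exists_norm_eq_one_sub_of_pow_eq (hd : d % 4 = 2 ∨ d % 4 = 3) (hδ : δ ^ 2 = d)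
    {β : 𝓞 K} {m : ℕ} (hm : Odd m) (hβ : β ^ m = 1 + δ) :
    ∃ b : ℚ, (Algebra.norm ℤ β : ℚ) = 1 - d * b ^ 2 := by
  obtain ⟨a, b, hab, hnorm⟩ := exists_eq_intCast_add_ratCast_mul_sqrt hd hδ β
  have hconj_pow : (2 * a - β) ^ m = 1 - δ :=
    conj_pow_eq_one_sub_sqrt (not_isSquare_ratCast_of_emod_four hd) hδ hβ
      (mul_two_mul_sub_eq_norm hδ hab hnorm)
  have hdvd : (2 * a : 𝓞 K) ∣ 2 * 1 := by
    have h := hm.add_dvd_pow_add_pow β (2 * a - β)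
    rwa [hβ, hconj_pow, add_sub_cancel, show 1 + δ + (1 - δ) = 2 * 1 by ring] at h
  have ha : IsUnit (a : 𝓞 K) := isUnit_of_dvd_one ((mul_dvd_mul_iff_left two_ne_zero).1 hdvd)
  have ha' : IsUnit a := (isUnit_map_iff (algebraMap ℤ (𝓞 K)) a).1 ha
  exact ⟨b, by rw [hnorm, ← Int.cast_pow, Int.isUnit_sq ha', Int.cast_one]⟩

end QuadraticField

section Pell

/-- The solutions of `x * X ^ 2 - (x - 1) * Y ^ 2 = 1` given by the odd powers
`(√x + √(x - 1)) ^ (2 * i + 1) = X * √x + Y * √(x - 1)`. -/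
def pellSolution (x : ℤ) : ℕ → ℤ × ℤ
  | 0 => (1, 1)
  | i + 1 => ((2 * x - 1) * (pellSolution x i).1 + 2 * (x - 1) * (pellSolution x i).2,
      2 * x * (pellSolution x i).1 + (2 * x - 1) * (pellSolution x i).2)

theorem pellSolution_equation (x : ℤ) (i : ℕ) :
    x * (pellSolution x i).1 ^ 2 - (x - 1) * (pellSolution x i).2 ^ 2 = 1 := by
  induction i with
  | zero => simp [pellSolution]
  | succ i ih => simp only [pellSolution]; linear_combination ih

theorem pellSolution_pos {x : ℤ} (hx : 1 ≤ x) (i : ℕ) :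
    0 < (pellSolution x i).1 ∧ 0 < (pellSolution x i).2 := by
  induction i with
  | zero => simp [pellSolution]
  | succ i ih =>
    obtain ⟨hX, hY⟩ := ih
    constructor <;> simp only [pellSolution] <;> nlinarith

-- Descent: multiply by the inverse `2 * x - 1 - 2 * √(x * (x - 1))` of `(√x + √(x - 1)) ^ 2`.
theorem exists_smaller_of_pell_equation {x X Y : ℤ} (hx : 2 ≤ x) (hX : 1 < X) (hY : 0 < Y)
    (h : x * X ^ 2 - (x - 1) * Y ^ 2 = 1) :
    ∃ X' Y' : ℤ, 0 < X' ∧ X' < X ∧ 0 < Y' ∧ x * X' ^ 2 - (x - 1) * Y' ^ 2 = 1 ∧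
      X = (2 * x - 1) * X' + 2 * (x - 1) * Y' ∧ Y = 2 * x * X' + (2 * x - 1) * Y' := by
  have hXY : X < Y := by
    by_contra! hle
    have hsq : Y ^ 2 ≤ X ^ 2 := by gcongr
    nlinarith
  set X' := (2 * x - 1) * X - 2 * (x - 1) * Y with hX'
  set Y' := (2 * x - 1) * Y - 2 * x * X with hY'
  have h' : x * X' ^ 2 - (x - 1) * Y' ^ 2 = 1 := by rw [hX', hY']; linear_combination h
  have hX'pos : 0 < X' := by
    have hsq : (2 * (x - 1) * Y) ^ 2 < ((2 * x - 1) * X) ^ 2 := by nlinarith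
    linarith [lt_of_pow_lt_pow_left₀ 2 (by nlinarith) hsq]
  have hY'pos : 0 < Y' := by
    by_contra! hle
    have hsum : 0 < Y' + X' := by linarith
    have hsq : Y' ^ 2 < X' ^ 2 := by nlinarith [hsum]
    nlinarith
  exact ⟨X', Y', hX'pos, by nlinarith, hY'pos, h', by rw [hX', hY']; ring, by rw [hX', hY']; ring⟩

theorem exists_eq_pellSolution {x X Y : ℤ} (hx : 2 ≤ x) (hX : 0 < X) (hY : 0 < Y)
    (h : x * X ^ 2 - (x - 1) * Y ^ 2 = 1) : ∃ i, pellSolution x i = (X, Y) := by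
  induction hk : X.toNat using Nat.strong_induction_on generalizing X Y with
  | _ k ih =>
    rcases (show X = 1 ∨ 1 < X by omega) with rfl | hX1
    · have hY1 : Y ^ 2 = 1 := mul_left_cancel₀ (show x - 1 ≠ 0 by omega) (by linear_combination -h)
      obtain rfl : Y = 1 := (sq_eq_one_iff.1 hY1).resolve_right (by omega)
      exact ⟨0, rfl⟩
    · obtain ⟨X', Y', hX', hlt, hY', h', rfl, rfl⟩ := exists_smaller_of_pell_equation hx hX1 hY h
      obtain ⟨i, hi⟩ := ih X'.toNat (by omega) hX' hY' h' rfl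
      exact ⟨i + 1, by simp only [pellSolution, hi]⟩

theorem pellSolution_three_mul_add_one (x : ℤ) (l : ℕ) :
    pellSolution x (3 * l + 1) =
      (x * (pellSolution x l).1 ^ 3 +
          3 * (x - 1) * (pellSolution x l).1 * (pellSolution x l).2 ^ 2,
        3 * x * (pellSolution x l).1 ^ 2 * (pellSolution x l).2 +
          (x - 1) * (pellSolution x l).2 ^ 3) := by
  induction l with
  | zero => ext <;> simp only [pellSolution] <;> ring
  | succ l ih =>
    rw [show 3 * (l + 1) + 1 = 3 * l + 1 + 1 + 1 + 1 by ring]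
    generalize 3 * l + 1 = k at ih
    simp only [pellSolution, ih, Prod.mk.injEq]
    constructor <;> ring

theorem pellSolution_three_mul_add_one_fst (x : ℤ) (l : ℕ) :
    (pellSolution x (3 * l + 1)).1 =
      (pellSolution x l).1 * (4 * (x * (pellSolution x l).1 ^ 2) - 3) := by
  rw [pellSolution_three_mul_add_one]
  linear_combination (-3) * (pellSolution x l).1 * pellSolution_equation x l

theorem dvd_pellSolution_sub (x : ℤ) (i : ℕ) :
    x ∣ (pellSolution x i).1 - (-1) ^ i * (2 * i + 1) ∧ x ∣ (pellSolution x i).2 - (-1) ^ i := by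
  induction i with
  | zero => simp [pellSolution]
  | succ i ih =>
    obtain ⟨⟨u, hu⟩, ⟨v, hv⟩⟩ := ih
    simp only [pellSolution, pow_succ]
    push_cast
    constructor
    · exact ⟨2 * (pellSolution x i).1 + 2 * (pellSolution x i).2 - u - 2 * v, by
        linear_combination -hu - 2 * hv⟩
    · exact ⟨2 * (pellSolution x i).1 + 2 * (pellSolution x i).2 - v, by linear_combination -hv⟩

theorem mod_three_eq_one_of_three_dvd_pellSolution_fst {x : ℤ} {i : ℕ} (hx : 3 ∣ x)
    (h : 3 ∣ (pellSolution x i).1) : i % 3 = 1 := by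
  have hdvd := (dvd_sub_right h).1 (hx.trans (dvd_pellSolution_sub x i).1)
  rw [((isUnit_one.neg).pow i).dvd_mul_left] at hdvd
  omega

end Pell

section ThreePow

theorem not_nine_dvd_of_three_pow_eq {t : ℤ} {b : ℕ} (h : 3 ^ b = 4 * t - 3) : ¬9 ∣ t := by
  rcases b with _ | _ | b
  · omega
  · omega
  · rw [pow_add] at h
    omega

theorem exists_eq_prime_pow_of_dvd {p X : ℤ} {j : ℕ} (hp : Prime p) (hp0 : 0 ≤ p) (hX : 0 ≤ X)
    (h : X ∣ p ^ j) : ∃ a, X = p ^ a := by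
  obtain ⟨a, -, ha⟩ := (dvd_prime_pow hp j).1 h
  exact ⟨a, Int.eq_of_associated_of_nonneg ha hX (by positivity)⟩

-- The index of the solution is `3 * l + 1`, so its first coordinate factors as
-- `X * (4 * x * X ^ 2 - 3)`; both factors are powers of `3`, which forces `X = 1`.
theorem eq_zero_or_three_pow_eq_of_pell_equation {x Y : ℤ} {j : ℕ} (hx : 0 < x) (hx3 : 3 ∣ x)
    (h : x * (3 ^ j) ^ 2 - (x - 1) * Y ^ 2 = 1) : j = 0 ∨ 3 ^ j = 4 * x - 3 := by
  refine or_iff_not_imp_left.2 fun hj ↦ ?_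
  have h3j : (3 : ℤ) ∣ 3 ^ j := dvd_pow_self 3 hj
  have hY : Y ≠ 0 := by
    rintro rfl
    have h1 : x ∣ 1 := ⟨(3 ^ j) ^ 2, by linear_combination -h⟩
    have h31 := hx3.trans h1
    omega
  obtain ⟨i, hi⟩ := exists_eq_pellSolution (x := x) (X := 3 ^ j) (by omega) (by positivity)
    (abs_pos.2 hY) (by rwa [sq_abs])
  replace hi : (pellSolution x i).1 = 3 ^ j := by rw [hi]
  obtain ⟨l, rfl⟩ : ∃ l, i = 3 * l + 1 :=
    ⟨i / 3, by have := mod_three_eq_one_of_three_dvd_pellSolution_fst hx3 (hi ▸ h3j); omega⟩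
  have hXpos : 0 < (pellSolution x l).1 := (pellSolution_pos (by omega) l).1
  rw [pellSolution_three_mul_add_one_fst] at hi
  obtain ⟨a, ha⟩ := exists_eq_prime_pow_of_dvd Int.prime_three (by norm_num)
    hXpos.le (Dvd.intro _ hi)
  obtain ⟨b, hb⟩ := exists_eq_prime_pow_of_dvd Int.prime_three (by norm_num)
    (by nlinarith) (Dvd.intro_left _ hi)
  have ha0 : a = 0 := by
    by_contra ha0
    have h3a : (3 : ℤ) ∣ (3 ^ a) ^ 2 := dvd_pow (dvd_pow_self 3 ha0) two_ne_zero
    exact not_nine_dvd_of_three_pow_eq hb.symm (ha ▸ mul_dvd_mul hx3 h3a)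
  rw [ha, ha0] at hi
  linarith

theorem eq_one_or_of_three_pow_sub_one_eq_mul_sq {s m : ℕ} (hs : s ≠ 0) (hm : Odd m) {Y : ℤ}
    (h : (3 : ℤ) ^ (s * m) - 1 = (3 ^ s - 1) * Y ^ 2) : m = 1 ∨ s = 1 ∧ m = 5 := by
  obtain ⟨k, rfl⟩ := hm
  have hpell : (3 : ℤ) ^ s * (3 ^ (s * k)) ^ 2 - (3 ^ s - 1) * Y ^ 2 = 1 := by
    rw [← h]; ring
  rcases eq_zero_or_three_pow_eq_of_pell_equation (by positivity) (dvd_pow_self 3 hs) hpell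
    with hk | hk
  · exact .inl (by simp [(mul_eq_zero.1 hk).resolve_left hs])
  · have hs1 : s = 1 := by
      by_contra hs1
      exact not_nine_dvd_of_three_pow_eq hk (pow_dvd_pow (3 : ℤ) (show 2 ≤ s by omega))
    subst hs1
    have hk2 : (3 : ℤ) ^ (1 * k) = 3 ^ 2 := by rw [hk]; norm_num
    have := Int.pow_right_injective (by norm_num) hk2
    omega

theorem eq_one_or_of_three_pow_sub_one_eq_mul_ratCast_sq {s m : ℕ} (hs : s ≠ 0) (hm : Odd m)
    {b : ℚ} (h : (3 : ℚ) ^ s - 1 = (3 ^ (s * m) - 1) * b ^ 2) : m = 1 ∨ s = 1 ∧ m = 5 := by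
  obtain ⟨M, hM⟩ : (3 ^ s - 1 : ℤ) ∣ 3 ^ (s * m) - 1 := by
    rw [pow_mul]; exact sub_one_dvd_pow_sub_one _ m
  have hs3 : (3 : ℚ) ^ s - 1 ≠ 0 := (sub_pos.2 (one_lt_pow₀ (by norm_num) hs)).ne'
  have hMb : (M : ℚ) * b ^ 2 = 1 := by
    have hM' : (3 : ℚ) ^ (s * m) - 1 = (3 ^ s - 1) * M := mod_cast hM
    rw [hM'] at h
    exact mul_left_cancel₀ hs3 (by linear_combination -h)
  obtain ⟨Y, hY⟩ : IsSquare M := by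
    refine Rat.isSquare_intCast_iff.1 ⟨b⁻¹, ?_⟩
    have hb : b ≠ 0 := by rintro rfl; simp at hMb
    field_simp
    exact hMb
  exact eq_one_or_of_three_pow_sub_one_eq_mul_sq hs hm (by rw [hM, hY, sq])

end ThreePow

section Splitting

variable {R : Type*} [CommRing R] {δ : R} {n : ℕ}

theorem isCoprime_one_add_add_one_add_neg {p : R} (hp : IsCoprime p 2) :
    IsCoprime p ((1 + δ) + (1 + -δ)) := by
  rwa [show (1 + δ) + (1 + -δ) = 2 by ring]

theorem span_pair_one_add_sqrt_pow {p : R} (hp : IsCoprime p 2) (hδ : δ ^ 2 = 1 - p ^ n) :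
    Ideal.span {p, 1 + δ} ^ n = Ideal.span {1 + δ} :=
  span_pair_pow_eq_span (isCoprime_one_add_add_one_add_neg hp) (by linear_combination -hδ)

theorem span_pair_one_add_sqrt_mul_span_pair {p : R} (hp : IsCoprime p 2) (hn : n ≠ 0)
    (hδ : δ ^ 2 = 1 - p ^ n) :
    Ideal.span {p, 1 + δ} * Ideal.span {p, 1 + -δ} = Ideal.span {p} := by
  refine span_pair_mul_span_pair_eq_span (isCoprime_one_add_add_one_add_neg hp) ?_
  rw [show (1 + δ) * (1 + -δ) = p ^ n by linear_combination -hδ]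
  exact dvd_pow_self p hn

theorem isPrime_span_pair_one_add_sqrt {K : Type*} [Field K] [NumberField K]
    [Algebra.IsQuadraticExtension ℚ K] {p : ℕ} (hp : p.Prime) (hp2 : p ≠ 2) (hn : n ≠ 0)
    {δ : 𝓞 K} (hδ : δ ^ 2 = 1 - (p : 𝓞 K) ^ n) :
    (Ideal.span {(p : 𝓞 K), 1 + δ}).IsPrime := by
  have hcop : IsCoprime (p : 𝓞 K) 2 :=
    mod_cast ((Nat.coprime_primes hp Nat.prime_two).2 hp2).cast (R := 𝓞 K)
  have hd : ¬IsSquare ((1 - p ^ n : ℤ) : ℚ) := by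
    have hlt : (1 : ℤ) < p ^ n := one_lt_pow₀ (mod_cast hp.one_lt) hn
    rw [Rat.isSquare_intCast_iff]
    exact fun h ↦ (sub_neg.2 hlt).not_ge h.nonneg
  have habs : Ideal.absNorm (Ideal.span {(p : 𝓞 K), 1 + δ}) = p := by
    rw [← Nat.pow_left_inj hn, ← map_pow, span_pair_one_add_sqrt_pow hcop hδ,
      Ideal.absNorm_span_singleton, norm_one_add_sqrt hd (mod_cast hδ), sub_sub_cancel]
    simp [Int.natAbs_pow]
  exact Ideal.isPrime_of_irreducible_absNorm (habs.symm ▸ hp)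

end Splitting

section ClassOrder

theorem one_sub_three_pow_emod_four {n : ℕ} (hn : Odd n) : (1 - 3 ^ n : ℤ) % 4 = 2 := by
  obtain ⟨k, rfl⟩ := hn
  have h9 : (9 : ℤ) ^ k ≡ 1 ^ k [ZMOD 4] := Int.ModEq.pow k rfl
  have h : (1 - 9 ^ k * 3 : ℤ) ≡ 1 - 1 ^ k * 3 [ZMOD 4] := (h9.mul_right 3).sub_left 1
  rw [pow_succ, pow_mul]
  rwa [one_pow] at h

theorem exists_sq_eq_intCast_ringOfIntegers_adjoin {L : Type*} [Field L] [Algebra ℚ L] {d : ℤ}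
    {z : L} (hz : z ^ 2 = d) : ∃ δ : 𝓞 ℚ⟮z⟯, δ ^ 2 = d := by
  have hgen : AdjoinSimple.gen ℚ z ^ 2 = d := Subtype.ext (by simpa using hz)
  have hint : IsIntegral ℤ (AdjoinSimple.gen ℚ z) :=
    .of_pow two_pos (hgen ▸ isIntegral_algebraMap (R := ℤ) (x := d))
  exact ⟨⟨_, hint⟩, RingOfIntegers.ext hgen⟩

variable {K : Type*} [Field K] [NumberField K] [Algebra.IsQuadraticExtension ℚ K] {n : ℕ} {δ : 𝓞 K}

theorem eq_one_of_associated_pow_one_add_sqrt (hn : Odd n) (hn5 : n ≠ 5)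
    (hδ : δ ^ 2 = ((1 - 3 ^ n : ℤ) : 𝓞 K)) {β : 𝓞 K} {s m : ℕ} (hsm : n = s * m)
    (hβ : Associated (β ^ m) (1 + δ)) : m = 1 := by
  have hd2 := one_sub_three_pow_emod_four hn
  have hneg : (1 - 3 ^ n : ℤ) < 0 := sub_neg.2 (one_lt_pow₀ (by norm_num) hn.pos.ne')
  obtain ⟨hs, hm⟩ := Nat.odd_mul.1 (hsm ▸ hn)
  obtain ⟨γ, hγ⟩ := exists_pow_eq_of_associated (.inl hd2) hneg
    (not_isSquare_of_emod_four (.inl (by omega))) hδ hm hβ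
  have hnorm : Algebra.norm ℤ γ = 3 ^ s := by
    rw [← hm.pow_inj, ← map_pow, hγ,
      norm_one_add_sqrt (not_isSquare_ratCast_of_emod_four (.inl hd2)) hδ, sub_sub_cancel,
      ← pow_mul, ← hsm]
  obtain ⟨b, hb⟩ := exists_norm_eq_one_sub_of_pow_eq (.inl hd2) hδ hm hγ
  rw [hnorm, hsm] at hb
  push_cast at hb
  refine (eq_one_or_of_three_pow_sub_one_eq_mul_ratCast_sq (b := b) hs.pos.ne' hm
    (by linear_combination hb)).resolve_right ?_
  rintro ⟨rfl, rfl⟩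
  exact hn5 hsm

theorem orderOf_mk0_span_three_one_add_sqrt (hn : Odd n) (hn5 : n ≠ 5) (hδ : δ ^ 2 = 1 - 3 ^ n)
    (h0 : Ideal.span {3, 1 + δ} ∈ nonZeroDivisors (Ideal (𝓞 K))) :
    orderOf (ClassGroup.mk0 ⟨Ideal.span {3, 1 + δ}, h0⟩) = n :=
  orderOf_mk0_eq_of_pow_eq_span h0 (span_pair_one_add_sqrt_pow ⟨1, -1, by norm_num⟩ hδ)
    fun _ _ _ ↦ eq_one_of_associated_pow_one_add_sqrt hn hn5 (mod_cast hδ)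

theorem stmt_8_general (hn : Odd n) (hn5 : n ≠ 5) (hδ : δ ^ 2 = 1 - 3 ^ n) :
    (∃ P Q : Ideal (𝓞 K), P ≠ Q ∧ P.IsPrime ∧ Q.IsPrime ∧ P * Q = Ideal.span {3}) ∧
    ∀ P : Ideal (𝓞 K), P.IsPrime → 3 ∈ P → ∀ hP0 : P ≠ 0,
      orderOf (ClassGroup.mk0 ⟨P, mem_nonZeroDivisors_of_ne_zero hP0⟩) = n := by
  have hn0 : n ≠ 0 := hn.pos.ne'
  have h32 : IsCoprime (3 : 𝓞 K) 2 := ⟨1, -1, by norm_num⟩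
  have hδ' : (-δ) ^ 2 = 1 - 3 ^ n := by rw [neg_sq, hδ]
  have hP : (Ideal.span {3, 1 + δ}).IsPrime :=
    mod_cast isPrime_span_pair_one_add_sqrt Nat.prime_three (by norm_num) hn0 (mod_cast hδ)
  have hQ : (Ideal.span {3, 1 + -δ}).IsPrime :=
    mod_cast isPrime_span_pair_one_add_sqrt Nat.prime_three (by norm_num) hn0 (mod_cast hδ')
  have hPQ := span_pair_one_add_sqrt_mul_span_pair h32 hn0 hδ
  have hne : Ideal.span {3, 1 + δ} ≠ Ideal.span {3, 1 + -δ} := by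
    intro h
    have hcop := isCoprime_span_pair (isCoprime_one_add_add_one_add_neg (δ := δ) h32)
    rw [h, isCoprime_self, Ideal.isUnit_iff] at hcop
    exact hQ.ne_top hcop
  refine ⟨⟨_, _, hne, hP, hQ, hPQ⟩, fun I hI h3 hI0 ↦ ?_⟩
  have hle : Ideal.span {3, 1 + δ} * Ideal.span {3, 1 + -δ} ≤ I := by
    rwa [hPQ, Ideal.span_singleton_le_iff_mem]
  rcases eq_or_eq_of_mul_le hP hQ hI (by simp [hPQ]) hle with rfl | rfl
  · exact orderOf_mk0_span_three_one_add_sqrt hn hn5 hδ _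
  · exact orderOf_mk0_span_three_one_add_sqrt hn hn5 hδ' _

end ClassOrder

/-- Let `p = 3` and let `n` be an odd integer greater than `1` with `n ≠ 5`. Then `3` splits
in the imaginary quadratic field `K = ℚ(√(1 − 3^n))`, and for any prime ideal `℘` of the ring
of integers of `K` lying over `3`, the order of the ideal class of `℘` in the ideal class
group of `K` is exactly `n`. -/
theorem stmt_8 (n : ℕ) (hn : 1 < n) (hodd : Odd n) (hne : n ≠ 5)
    (z : ℂ) (hz : z ^ 2 = 1 - (3 : ℂ) ^ n)
    (K : IntermediateField ℚ ℂ) (hK : K = IntermediateField.adjoin ℚ {z})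
    [NumberField K] :
    (∃ P Q : Ideal (NumberField.RingOfIntegers K), P ≠ Q ∧ P.IsPrime ∧ Q.IsPrime ∧
        P * Q = Ideal.span {(3 : NumberField.RingOfIntegers K)}) ∧
    ∀ (P : Ideal (NumberField.RingOfIntegers K)), P.IsPrime →
      (3 : NumberField.RingOfIntegers K) ∈ P → ∀ (hP0 : P ≠ 0),
      orderOf (ClassGroup.mk0 ⟨P, mem_nonZeroDivisors_of_ne_zero hP0⟩) = n := by
  subst hK
  have hz' : z ^ 2 = ((1 - 3 ^ n : ℤ) : ℂ) := by rw [hz]; push_cast; rfl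
  have hd := not_isSquare_ratCast_of_emod_four (.inl (one_sub_three_pow_emod_four hodd))
  -- `stmt_8_general` carries this `ℚ`-algebra structure rather than that of an intermediate field.
  have : @Algebra.IsQuadraticExtension ℚ ℚ⟮z⟯ _ _ _ DivisionRing.toRatAlgebra :=
    isQuadraticExtension_adjoin_sqrt hd (by simpa using hz')
  obtain ⟨δ, hδ⟩ := exists_sq_eq_intCast_ringOfIntegers_adjoin hz'
  exact stmt_8_general hodd hne (mod_cast hδ)
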